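/- Let 2 ≤ N ≤ d and B > 1. There exists B₁ > 1, depending only on B, N and d, such that for every γ ∈ 𝔊(B,N), every s₀ ∈ I and every 0 < ρ ≤ B^{−2d} with [s₀ − ρ, s₀ + ρ] ⊆ I, the rescaled curve γ̃(s) := T^{−1}(γ(s₀ + ρ s) − γ(s₀)) belongs to 𝔊(B₁, N−1). -/

import Mathlib

open MeasureTheory Real Matrix
open scoped RealInnerProductSpace ENNReal

noncomputable section

abbrev E (d : ℕ) : Type := EuclideanSpace ℝ (Fin d)

def segI : Set ℝ := Set.Icc (-1) 1

/-- The class of curves 𝔊(B,L): `C^{2d}` bounds by `B` and the sum of squares of the `L×L`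
minors of `(γ⁽¹⁾(s) ⋯ γ⁽ᴸ⁾(s))`, i.e. the Gram determinant, at least `B⁻²`. -/
def CurveClass {d : ℕ} (B : ℝ) (L : ℕ) (γ : ℝ → E d) : Prop :=
  ContDiff ℝ ((2 * d : ℕ) : ℕ∞) γ ∧
  (∀ j ≤ 2 * d, ∀ s ∈ segI, ‖iteratedDeriv j γ s‖ ≤ B) ∧
  (∀ s ∈ segI,
    (B ^ 2)⁻¹ ≤
      (((Matrix.of fun i (j : Fin L) => iteratedDeriv ((j : ℕ) + 1) γ s i))ᵀ *
        (Matrix.of fun (i : Fin d) (j : Fin L) => iteratedDeriv ((j : ℕ) + 1) γ s i)).det)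

/-!
The map `S = ρ ^ N • T⁻¹` multiplies `γ⁽ⁱ⁾(s₀)` by `ρ ^ (N - i) ≤ 1` and fixes the orthogonal
complement of these vectors, so Cramer's rule and Hadamard's inequality bound `‖S‖` by a constant
`K` independent of `ρ`. Since `γ̃⁽ʲ⁾(s) = ρ ^ (j - N) • S (γ⁽ʲ⁾(s₀ + ρ s))` for `j ≥ N`, this
controls the derivatives of order at least `N`. The lower ones satisfy `γ̃⁽ʲ⁾(0) = γ⁽ʲ⁾(s₀)`
(`j ≥ 1`) and follow by integrating from `0`.

For the Gram determinant, complete the frame `γ⁽¹⁾, …, γ⁽ᴺ⁾` at `s₀ + ρ s` by an orthonormal family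
to a basis. The map `S` multiplies the volume of this basis by `|det S|` and lengthens the added
vectors by at most `K`, so by Fischer's inequality it shrinks the volume of the frame at most by the
factor `|det S| / K ^ (d - N)`. As `S (γ⁽ⁱ⁾(s₀ + ρ s)) = ρ ^ (N - i) • γ̃⁽ⁱ⁾(s)` and `|det S|` is
the product of the same powers `ρ ^ (N - i)`, these powers cancel.
-/

section Gram

variable {F : Type*} [NormedAddCommGroup F] [InnerProductSpace ℝ F]
variable {ι κ : Type*} [Fintype ι] [Fintype κ]

lemma exists_orthonormal_compl [FiniteDimensional ℝ F] {v : ι → F} (hv : LinearIndependent ℝ v) :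
    ∃ u : Fin (Module.finrank ℝ F - Fintype.card ι) → F,
      Orthonormal ℝ u ∧ ∀ i j, ⟪v i, u j⟫ = 0 := by
  let W := Submodule.span ℝ (Set.range v)
  have hfinrank : Module.finrank ℝ Wᗮ = Module.finrank ℝ F - Fintype.card ι := by
    rw [← W.finrank_add_finrank_orthogonal, finrank_span_eq_card hv, Nat.add_sub_cancel_left]
  let b := (stdOrthonormalBasis ℝ Wᗮ).reindex (finCongr hfinrank)
  have hmem (i : ι) : v i ∈ W := Submodule.subset_span (Set.mem_range_self i)
  exact ⟨fun j => b j, b.orthonormal.comp_linearIsometry Wᗮ.subtypeₗᵢ, fun i j =>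
    Submodule.inner_right_of_mem_orthogonal (hmem i) (b j).2⟩

lemma exists_sum_smul_add_orthogonal (v : ι → F) (w : F) :
    ∃ (b : ι → ℝ) (q : F), w = ∑ i, b i • v i + q ∧ (∀ i, ⟪v i, q⟫ = 0) ∧
      ‖∑ i, b i • v i‖ ≤ ‖w‖ ∧ ‖q‖ ≤ ‖w‖ := by
  let W := Submodule.span ℝ (Set.range v)
  have : FiniteDimensional ℝ W := FiniteDimensional.span_of_finite ℝ (Set.finite_range v)
  obtain ⟨b, hb⟩ := (Submodule.mem_span_range_iff_exists_fun ℝ).1 (W.starProjection_apply_mem w)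
  refine ⟨b, Wᗮ.starProjection w, ?_, fun i => ?_, ?_, Wᗮ.norm_starProjection_apply_le w⟩
  · rw [hb, W.starProjection_add_starProjection_orthogonal]
  · exact Submodule.inner_right_of_mem_orthogonal (Submodule.subset_span (Set.mem_range_self i))
      (Wᗮ.starProjection_apply_mem w)
  · exact hb ▸ W.norm_starProjection_apply_le w

variable [DecidableEq ι] [DecidableEq κ]

/-- The Gram determinant `det (⟪vᵢ, vⱼ⟫)` of a finite family of vectors, i.e. the square of the
volume of the parallelepiped that it spans. -/
def gramDet (v : ι → F) : ℝ := (gram ℝ v).det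

lemma gramDet_nonneg (v : ι → F) : 0 ≤ gramDet v :=
  (posSemidef_gram ℝ v).det_nonneg

lemma gramDet_ne_zero_iff_linearIndependent {v : ι → F} :
    gramDet v ≠ 0 ↔ LinearIndependent ℝ v :=
  det_gram_ne_zero_iff_linearIndependent

lemma gramDet_comp_equiv (e : κ ≃ ι) (v : ι → F) : gramDet (v ∘ e) = gramDet v :=
  det_submatrix_equiv_self e (gram ℝ v)

lemma gramDet_sum_smul (A : Matrix ι ι ℝ) (v : ι → F) :
    gramDet (fun i => ∑ j, A i j • v j) = A.det ^ 2 * gramDet v := by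
  have hgram : gram ℝ (fun i => ∑ j, A i j • v j) = A * gram ℝ v * Aᵀ := by
    ext i k
    simp only [gram_apply, sum_inner, inner_sum, real_inner_smul_left, real_inner_smul_right,
      Matrix.mul_apply, transpose_apply, Finset.sum_mul]
    refine Finset.sum_congr rfl fun j _ => Finset.sum_congr rfl fun l _ => ?_
    ring
  rw [gramDet, gramDet, hgram, det_mul, det_mul, det_transpose]
  ring

lemma gramDet_smul (c : ι → ℝ) (v : ι → F) :
    gramDet (fun i => c i • v i) = (∏ i, c i) ^ 2 * gramDet v := by
  simpa [diagonal_apply, ite_smul] using gramDet_sum_smul (diagonal c) v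

lemma gramDet_sumElim_unit_le (x : ι → F) (y : F) :
    gramDet (Sum.elim x fun _ : Unit => y) ≤ gramDet x * ‖y‖ ^ 2 := by
  by_cases hx : LinearIndependent ℝ x
  · have hpos := posDef_gram_of_linearIndependent hx
    let b : Matrix ι Unit ℝ := of fun i _ => ⟪x i, y⟫
    have hblocks : gram ℝ (Sum.elim x fun _ : Unit => y) =
        fromBlocks (gram ℝ x) b bᴴ (gram ℝ fun _ : Unit => y) := by
      ext (i | i) (j | j) <;> simp [b, real_inner_comm]
    let := hpos.isUnit.invertible
    have hschur : 0 ≤ (bᴴ * (gram ℝ x)⁻¹ * b) () () :=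
      (hpos.inv.posSemidef.conjTranspose_mul_mul_same b).diag_nonneg
    rw [gramDet, hblocks, det_fromBlocks₁₁, invOf_eq_nonsing_inv,
      det_unique (_ - _)]
    refine mul_le_mul_of_nonneg_left ?_ (gramDet_nonneg x)
    simpa [real_inner_self_eq_norm_sq] using hschur
  · have hxy : ¬ LinearIndependent ℝ (Sum.elim x fun _ : Unit => y) := fun h =>
      hx (h.comp Sum.inl Sum.inl_injective)
    rw [not_ne_iff.1 (gramDet_ne_zero_iff_linearIndependent.not.2 hxy)]
    exact mul_nonneg (gramDet_nonneg x) (sq_nonneg _)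

lemma gramDet_sumElim_le (x : ι → F) (y : κ → F) :
    gramDet (Sum.elim x y) ≤ gramDet x * ∏ j, ‖y j‖ ^ 2 := by
  refine Fintype.induction_empty_option
    (P := fun κ _ => ∀ [DecidableEq κ] (y : κ → F),
      gramDet (Sum.elim x y) ≤ gramDet x * ∏ j, ‖y j‖ ^ 2) ?_ ?_ ?_ κ y
  · intro α β _ e ih _ y
    classical
    let := Fintype.ofEquiv β e.symm
    rw [← gramDet_comp_equiv ((Equiv.refl ι).sumCongr e), ← e.prod_comp]
    have hmap : Sum.elim x y ∘ (Equiv.refl ι).sumCongr e = Sum.elim x (y ∘ e) := Sum.elim_comp_map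
    rw [hmap]
    exact ih (y ∘ e)
  · intro _ y
    rw [← gramDet_comp_equiv (Equiv.sumEmpty ι PEmpty).symm]
    simp [Function.comp_def]
  · intro κ _ ih _ y
    classical
    let e : (ι ⊕ κ) ⊕ Unit ≃ ι ⊕ Option κ := (Equiv.sumAssoc ι κ Unit).trans
      ((Equiv.refl ι).sumCongr (Equiv.optionEquivSumPUnit κ).symm)
    have hregroup : Sum.elim x y ∘ e = Sum.elim (Sum.elim x (y ∘ some)) fun _ => y none := by
      ext ((i | k) | u) <;> rfl
    rw [← gramDet_comp_equiv e, hregroup, Fintype.prod_option, mul_comm (‖y none‖ ^ 2), ← mul_assoc]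
    exact (gramDet_sumElim_unit_le _ _).trans (mul_le_mul_of_nonneg_right (ih _) (sq_nonneg _))

lemma gramDet_le_prod_norm_sq (v : ι → F) : gramDet v ≤ ∏ i, ‖v i‖ ^ 2 := by
  have h := gramDet_sumElim_le (Empty.elim : Empty → F) v
  have hinr : Sum.elim (Empty.elim : Empty → F) v ∘ (Equiv.emptySum Empty ι).symm = v := rfl
  rw [← gramDet_comp_equiv (Equiv.emptySum Empty ι).symm, hinr] at h
  simpa [gramDet] using h

lemma sq_mul_gramDet_le (v : ι → F) (b : ι → ℝ) (i : ι) :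
    b i ^ 2 * gramDet v ≤ ‖∑ j, b j • v j‖ ^ 2 * ∏ j ∈ Finset.univ.erase i, ‖v j‖ ^ 2 := by
  have hdet : ((1 : Matrix ι ι ℝ).updateRow i b).det = b i := by
    rw [← cramer_transpose_apply, transpose_one, cramer_one, Module.End.one_apply]
  have hupdate : (fun k => ∑ j, (1 : Matrix ι ι ℝ).updateRow i b k j • v j) =
      Function.update v i (∑ j, b j • v j) := by
    ext1 k
    rcases eq_or_ne k i with rfl | hk
    · simp
    · simp [updateRow_ne hk, Function.update_of_ne hk, Matrix.one_apply, ite_smul]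
  calc b i ^ 2 * gramDet v = gramDet (Function.update v i (∑ j, b j • v j)) := by
        rw [← hupdate, gramDet_sum_smul, hdet]
    _ ≤ ∏ k, ‖Function.update v i (∑ j, b j • v j) k‖ ^ 2 := gramDet_le_prod_norm_sq _
    _ = _ := by
        rw [← Finset.mul_prod_erase _ _ (Finset.mem_univ i), Function.update_self]
        congr 1
        refine Finset.prod_congr rfl fun k hk => ?_
        rw [Function.update_of_ne (Finset.ne_of_mem_erase hk)]

lemma abs_le_pow_card_mul_norm_sum_smul {v : ι → F} {B : ℝ} (hB : 0 < B) (hv : ∀ i, ‖v i‖ ≤ B)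
    (hdet : (B ^ 2)⁻¹ ≤ gramDet v) (b : ι → ℝ) (i : ι) :
    |b i| ≤ B ^ Fintype.card ι * ‖∑ j, b j • v j‖ := by
  set x := ∑ j, b j • v j
  have hprod : ∏ j ∈ Finset.univ.erase i, ‖v j‖ ^ 2 ≤ (B ^ 2) ^ (Fintype.card ι - 1) :=
    (Finset.prod_le_prod (fun _ _ => sq_nonneg _) fun j _ =>
      pow_le_pow_left₀ (norm_nonneg _) (hv j) 2).trans_eq (by simp)
  have hcoeff : b i ^ 2 * (B ^ 2)⁻¹ ≤ ‖x‖ ^ 2 * (B ^ 2) ^ (Fintype.card ι - 1) :=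
    calc b i ^ 2 * (B ^ 2)⁻¹ ≤ b i ^ 2 * gramDet v := by gcongr
      _ ≤ _ := (sq_mul_gramDet_le v b i).trans (by gcongr)
  have hcard : Fintype.card ι - 1 + 1 = Fintype.card ι :=
    Nat.sub_add_cancel (Fintype.card_pos_iff.2 ⟨i⟩)
  refine abs_le_of_sq_le_sq ?_ (by positivity)
  rw [← div_eq_mul_inv, div_le_iff₀ (by positivity), mul_assoc, ← pow_succ, hcard] at hcoeff
  rwa [mul_pow, pow_right_comm, mul_comm]

lemma gramDet_sumElim_of_orthonormal {v : ι → F} {u : κ → F} (hu : Orthonormal ℝ u)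
    (huv : ∀ i j, ⟪v i, u j⟫ = 0) : gramDet (Sum.elim v u) = gramDet v := by
  have hblocks : gram ℝ (Sum.elim v u) = fromBlocks (gram ℝ v) 0 0 (gram ℝ u) := by
    ext (i | i) (j | j) <;> simp [huv, real_inner_comm]
  rw [gramDet, hblocks, det_fromBlocks_zero₂₁, gram_eq_one_iff_orthonormal.2 hu, det_one, mul_one,
    gramDet]

variable [FiniteDimensional ℝ F]

lemma gramDet_map_of_card_eq_finrank {w : ι → F} (hw : Fintype.card ι = Module.finrank ℝ F)
    (S : F →ₗ[ℝ] F) : gramDet (S ∘ w) = LinearMap.det S ^ 2 * gramDet w := by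
  let b : OrthonormalBasis ι ℝ F :=
    (stdOrthonormalBasis ℝ F).reindex (Fintype.equivFinOfCardEq hw).symm
  have hsq (x : ι → F) : gramDet x = b.toBasis.det x ^ 2 := by
    rw [gramDet, gram_eq_conjTranspose_mul b, det_mul, det_conjTranspose, star_trivial, sq]
    rfl
  rw [hsq, hsq, b.toBasis.det_comp, mul_pow]

lemma det_sq_mul_gramDet_le {S : F →ₗ[ℝ] F} {K : ℝ} (hS : ∀ x, ‖S x‖ ≤ K * ‖x‖) (v : ι → F) :
    LinearMap.det S ^ 2 * gramDet v ≤
      gramDet (S ∘ v) * (K ^ (Module.finrank ℝ F - Fintype.card ι)) ^ 2 := by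
  by_cases hv : LinearIndependent ℝ v
  · obtain ⟨u, hu, huv⟩ := exists_orthonormal_compl hv
    have hcard : Fintype.card (ι ⊕ Fin (Module.finrank ℝ F - Fintype.card ι)) =
        Module.finrank ℝ F := by
      rw [Fintype.card_sum, Fintype.card_fin, Nat.add_sub_of_le hv.fintype_card_le_finrank]
    calc LinearMap.det S ^ 2 * gramDet v = gramDet (S ∘ Sum.elim v u) := by
          rw [gramDet_map_of_card_eq_finrank hcard, gramDet_sumElim_of_orthonormal hu huv]
      _ ≤ gramDet (S ∘ v) * ∏ j, ‖S (u j)‖ ^ 2 := by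
          rw [Sum.comp_elim]
          exact gramDet_sumElim_le _ _
      _ ≤ gramDet (S ∘ v) * ∏ _j : Fin (Module.finrank ℝ F - Fintype.card ι), K ^ 2 := by
          gcongr with j
          · exact gramDet_nonneg _
          · simpa [hu.1 j] using hS (u j)
      _ = _ := by simp [pow_right_comm]
  · rw [not_ne_iff.1 (gramDet_ne_zero_iff_linearIndependent.not.2 hv), mul_zero]
    exact mul_nonneg (gramDet_nonneg _) (sq_nonneg _)

end Gram

section ScalesFrame

variable {F : Type*} [NormedAddCommGroup F] [InnerProductSpace ℝ F]
variable {ι : Type*} {v : ι → F} {a : ι → ℝ} {S : F →ₗ[ℝ] F}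

/-- `S` multiplies each vector `v i` of a frame by `a i` and fixes the orthogonal complement of the
frame. The map `T` of the theorem enters as `S = ρ ^ N • T⁻¹`, whose factors are at most `1`. -/
structure ScalesFrame (v : ι → F) (a : ι → ℝ) (S : F →ₗ[ℝ] F) : Prop where
  map_frame : ∀ i, S (v i) = a i • v i
  map_of_orthogonal : ∀ w, (∀ i, ⟪v i, w⟫ = 0) → S w = w

variable [Fintype ι]

lemma ScalesFrame.det_sq [FiniteDimensional ℝ F] (hS : ScalesFrame v a S)
    (hv : LinearIndependent ℝ v) :
    LinearMap.det S ^ 2 = (∏ i, a i) ^ 2 := by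
  classical
  obtain ⟨u, hu, huv⟩ := exists_orthonormal_compl hv
  have hcard : Fintype.card (ι ⊕ Fin (Module.finrank ℝ F - Fintype.card ι)) =
      Module.finrank ℝ F := by
    rw [Fintype.card_sum, Fintype.card_fin, Nat.add_sub_of_le hv.fintype_card_le_finrank]
  have hSw : S ∘ Sum.elim v u = fun k => Sum.elim a 1 k • Sum.elim v u k := by
    ext1 (i | j)
    · exact hS.map_frame i
    · simpa using hS.map_of_orthogonal (u j) fun i => huv i j
  have hne : gramDet (Sum.elim v u) ≠ 0 := by
    rw [gramDet_sumElim_of_orthonormal hu huv]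
    exact gramDet_ne_zero_iff_linearIndependent.2 hv
  refine mul_right_cancel₀ hne ?_
  rw [← gramDet_map_of_card_eq_finrank hcard, hSw, gramDet_smul]
  simp

variable [DecidableEq ι]

lemma ScalesFrame.norm_apply_le (hS : ScalesFrame v a S) (ha : ∀ i, |a i| ≤ 1) {B : ℝ}
    (hB : 0 < B) (hv : ∀ i, ‖v i‖ ≤ B) (hdet : (B ^ 2)⁻¹ ≤ gramDet v) (w : F) :
    ‖S w‖ ≤ (Fintype.card ι * B ^ (Fintype.card ι + 1) + 1) * ‖w‖ := by
  obtain ⟨b, q, hw, hq, hbw, hqw⟩ := exists_sum_smul_add_orthogonal v w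
  have hSw : S w = ∑ i, b i • a i • v i + q := by
    conv_lhs => rw [hw, map_add, map_sum, hS.map_of_orthogonal q hq]
    simp only [map_smul, hS.map_frame]
  have hterm (i : ι) : ‖b i • a i • v i‖ ≤ B ^ (Fintype.card ι + 1) * ‖w‖ :=
    calc ‖b i • a i • v i‖ = |b i| * (|a i| * ‖v i‖) := by
          rw [norm_smul, norm_smul, Real.norm_eq_abs, Real.norm_eq_abs]
      _ ≤ (B ^ Fintype.card ι * ‖w‖) * (1 * B) := by
          gcongr
          · exact (abs_le_pow_card_mul_norm_sum_smul hB hv hdet b i).trans (by gcongr)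
          · exact ha i
          · exact hv i
      _ = B ^ (Fintype.card ι + 1) * ‖w‖ := by ring
  calc ‖S w‖ ≤ ∑ i, ‖b i • a i • v i‖ + ‖q‖ := by
        rw [hSw]
        exact (norm_add_le _ _).trans (by gcongr; exact norm_sum_le _ _)
    _ ≤ ∑ _i : ι, B ^ (Fintype.card ι + 1) * ‖w‖ + ‖w‖ := by
        gcongr with i
        exact hterm i
    _ = (Fintype.card ι * B ^ (Fintype.card ι + 1) + 1) * ‖w‖ := by
        rw [Finset.sum_const, Finset.card_univ, nsmul_eq_mul]
        ring

lemma ScalesFrame.gramDet_le [FiniteDimensional ℝ F] (hS : ScalesFrame v a S)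
    (hv : LinearIndependent ℝ v) (ha : ∀ i, a i ≠ 0) {K : ℝ} (hK : ∀ x, ‖S x‖ ≤ K * ‖x‖)
    {V W : ι → F} (hVW : ∀ i, S (V i) = a i • W i) :
    gramDet V ≤ gramDet W * (K ^ (Module.finrank ℝ F - Fintype.card ι)) ^ 2 := by
  have hSV : gramDet (S ∘ V) = (∏ i, a i) ^ 2 * gramDet W := by
    rw [← gramDet_smul]
    exact congrArg gramDet (funext hVW)
  have hprod : 0 < (∏ i, a i) ^ 2 := sq_pos_of_ne_zero (Finset.prod_ne_zero_iff.2 fun i _ => ha i)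
  refine le_of_mul_le_mul_left ?_ hprod
  rw [← mul_assoc, ← hSV, ← hS.det_sq hv]
  exact det_sq_mul_gramDet_le hK V

end ScalesFrame

section Derivatives

variable {F G : Type*} [NormedAddCommGroup F] [NormedSpace ℝ F] [NormedAddCommGroup G]
  [NormedSpace ℝ G]

lemma iteratedDeriv_clm_comp {f : ℝ → F} {n : ℕ} (hf : ContDiff ℝ n f) (S : F →L[ℝ] G) :
    iteratedDeriv n (fun s => S (f s)) = fun s => S (iteratedDeriv n f s) := by
  ext1 s
  simp only [iteratedDeriv_eq_iteratedFDeriv]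
  exact congrArg (· fun _ => 1) (S.iteratedFDeriv_comp_left hf.contDiffAt le_rfl)

lemma iteratedDeriv_clm_comp_rescale {γ : ℝ → F} {n : ℕ} (hγ : ContDiff ℝ n γ) (S : F →L[ℝ] G)
    (s₀ ρ : ℝ) (hn : 0 < n) (s : ℝ) :
    iteratedDeriv n (fun s => S (γ (s₀ + ρ * s) - γ s₀)) s =
      ρ ^ n • S (iteratedDeriv n γ (s₀ + ρ * s)) := by
  have hshift : ContDiff ℝ n fun t => -γ s₀ + γ (s₀ + t) :=
    contDiff_const.add (hγ.comp (contDiff_const.add contDiff_id))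
  have hscale := congrFun (iteratedDeriv_comp_const_smul (S.contDiff.comp hshift) ρ) s
  simp only [Function.comp_def, iteratedDeriv_clm_comp hshift, iteratedDeriv_const_add hn,
    iteratedDeriv_comp_const_add] at hscale
  simpa only [sub_eq_neg_add] using hscale

lemma norm_iteratedDeriv_le_of_norm_iteratedDeriv_le {f : ℝ → F} {n : ℕ} {A M : ℝ}
    (hf : ContDiff ℝ n f) (hM : ∀ s ∈ segI, ‖iteratedDeriv n f s‖ ≤ M)
    (hA : ∀ j < n, ‖iteratedDeriv j f 0‖ ≤ A) {j k : ℕ} (hjk : j + k = n) {s : ℝ}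
    (hs : s ∈ segI) : ‖iteratedDeriv j f s‖ ≤ M + k * A := by
  induction k generalizing j s with
  | zero =>
    obtain rfl : j = n := hjk
    simpa using hM s hs
  | succ k ih =>
    have hdiff : Differentiable ℝ (iteratedDeriv j f) :=
      hf.differentiable_iteratedDeriv j (mod_cast (by omega : j < n))
    have hderiv (x : ℝ) (hx : x ∈ segI) : ‖deriv (iteratedDeriv j f) x‖ ≤ M + k * A := by
      rw [← iteratedDeriv_succ]
      exact ih (by omega) hx
    have h0 : (0 : ℝ) ∈ segI := by norm_num [segI]
    have hmv := (convex_Icc (-1 : ℝ) 1).norm_image_sub_le_of_norm_deriv_le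
      (fun x _ => hdiff x) hderiv h0 hs
    calc ‖iteratedDeriv j f s‖
        ≤ ‖iteratedDeriv j f 0‖ + ‖iteratedDeriv j f s - iteratedDeriv j f 0‖ :=
          norm_le_norm_add_norm_sub' _ _
      _ ≤ A + (M + k * A) * 1 := by
          refine add_le_add (hA j (by omega)) (hmv.trans ?_)
          gcongr
          · exact (norm_nonneg _).trans (hderiv 0 h0)
          · rw [sub_zero]
            exact abs_le.2 hs
      _ = M + (k + 1 : ℕ) * A := by
          push_cast
          ring

end Derivatives

section DerivFrame

variable {F : Type*} [NormedAddCommGroup F]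

/-- The vectors `γ⁽¹⁾(s), …, γ⁽ᴸ⁾(s)`, indexed from `0`: the columns of the matrix in the definition
of `𝔊(B, L)`. -/
def derivFrame [NormedSpace ℝ F] (L : ℕ) (γ : ℝ → F) (s : ℝ) : Fin L → F :=
  fun j => iteratedDeriv (j + 1) γ s

lemma gramDet_derivFrame_succ_le [InnerProductSpace ℝ F] (L : ℕ) (γ : ℝ → F) (s : ℝ) :
    gramDet (derivFrame (L + 1) γ s) ≤
      gramDet (derivFrame L γ s) * ‖iteratedDeriv (L + 1) γ s‖ ^ 2 := by
  have hsplit : derivFrame (L + 1) γ s ∘ (finSumFinEquiv : Fin L ⊕ Fin 1 ≃ Fin (L + 1)) =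
      Sum.elim (derivFrame L γ s) fun _ => iteratedDeriv (L + 1) γ s := by
    ext1 (i | i)
    · rfl
    · simp [derivFrame]
  rw [← gramDet_comp_equiv finSumFinEquiv, hsplit]
  simpa using gramDet_sumElim_le (derivFrame L γ s) fun _ : Fin 1 => iteratedDeriv (L + 1) γ s

end DerivFrame

section CurveClass

variable {d : ℕ} {B : ℝ} {γ : ℝ → E d}

lemma gramDet_eq_det_transpose_mul {ι : Type*} [Fintype ι] [DecidableEq ι] (v : ι → E d) :
    gramDet v = ((of fun i j => v j i)ᵀ * of fun i j => v j i).det := by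
  rw [gramDet]
  congr 1
  ext i j
  simp [gram_apply, PiLp.inner_apply, Matrix.mul_apply, mul_comm]

lemma curveClass_iff {L : ℕ} : CurveClass B L γ ↔ ContDiff ℝ ((2 * d : ℕ) : ℕ∞) γ ∧
    (∀ j ≤ 2 * d, ∀ s ∈ segI, ‖iteratedDeriv j γ s‖ ≤ B) ∧
      ∀ s ∈ segI, (B ^ 2)⁻¹ ≤ gramDet (derivFrame L γ s) := by
  simp only [gramDet_eq_det_transpose_mul]
  rfl

lemma CurveClass.linearIndependent_derivFrame {L : ℕ} (hγ : CurveClass B L γ) (hB : 0 < B) {s : ℝ}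
    (hs : s ∈ segI) : LinearIndependent ℝ (derivFrame L γ s) :=
  gramDet_ne_zero_iff_linearIndependent.1
    ((inv_pos.2 (pow_pos hB 2)).trans_le ((curveClass_iff.1 hγ).2.2 s hs)).ne'

lemma CurveClass.of_succ {L : ℕ} (hγ : CurveClass B (L + 1) γ) (hB : 1 ≤ B) (hL : L + 1 ≤ 2 * d) :
    CurveClass (B ^ 2) L γ := by
  obtain ⟨hsmooth, hbound, hdet⟩ := curveClass_iff.1 hγ
  refine curveClass_iff.2 ⟨hsmooth, fun j hj s hs =>
    (hbound j hj s hs).trans (le_self_pow₀ hB two_ne_zero), fun s hs => ?_⟩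
  have hle : (B ^ 2)⁻¹ ≤ gramDet (derivFrame L γ s) * B ^ 2 :=
    ((hdet s hs).trans (gramDet_derivFrame_succ_le L γ s)).trans <|
      mul_le_mul_of_nonneg_left (pow_le_pow_left₀ (norm_nonneg _) (hbound _ hL s hs) 2)
        (gramDet_nonneg _)
  rw [sq (B ^ 2), mul_inv]
  exact (mul_inv_le_iff₀ (by positivity)).2 hle

end CurveClass

section Rescaling

variable {d N : ℕ} {γ : ℝ → E d} {s₀ ρ B : ℝ} {T : E d ≃ₗ[ℝ] E d}

/-- The rescaled curve `γ̃` of the theorem, for an arbitrary invertible linear map `T`. -/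
def rescaledCurve (γ : ℝ → E d) (s₀ ρ : ℝ) (T : E d ≃ₗ[ℝ] E d) (s : ℝ) : E d :=
  T.symm (γ (s₀ + ρ * s) - γ s₀)

/-- `T` is the anisotropic scaling attached to the first `N` derivatives of `γ` at `s₀`. It is
stated for linear equivalences, so that `T⁻¹` in the definition of `γ̃` is `T.symm`. -/
structure IsAnisotropicScaling (N : ℕ) (γ : ℝ → E d) (s₀ ρ : ℝ) (T : E d ≃ₗ[ℝ] E d) : Prop where
  map_iteratedDeriv : ∀ i : ℕ, 1 ≤ i → i ≤ N →
    T (iteratedDeriv i γ s₀) = ρ ^ i • iteratedDeriv i γ s₀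
  map_of_orthogonal : ∀ v : E d, (∀ i : ℕ, 1 ≤ i → i ≤ N → ⟪iteratedDeriv i γ s₀, v⟫ = 0) →
    T v = ρ ^ N • v

lemma IsAnisotropicScaling.pow_smul_symm_iteratedDeriv (hT : IsAnisotropicScaling N γ s₀ ρ T)
    {i : ℕ} (hi : 1 ≤ i) (hiN : i ≤ N) :
    ρ ^ i • T.symm (iteratedDeriv i γ s₀) = iteratedDeriv i γ s₀ := by
  rw [← map_smul, ← hT.map_iteratedDeriv i hi hiN, T.symm_apply_apply]

lemma IsAnisotropicScaling.scalesFrame (hT : IsAnisotropicScaling N γ s₀ ρ T) :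
    ScalesFrame (derivFrame N γ s₀) (fun i => ρ ^ (N - (i + 1)))
      (ρ ^ N • T.symm.toLinearMap) where
  map_frame i := by
    have hi : (i : ℕ) + 1 ≤ N := i.isLt
    change ρ ^ N • T.symm (iteratedDeriv (i + 1) γ s₀) = _ • iteratedDeriv (i + 1) γ s₀
    rw [← pow_sub_mul_pow ρ hi, mul_smul,
      hT.pow_smul_symm_iteratedDeriv (Nat.le_add_left 1 i) hi]
  map_of_orthogonal w hw := by
    have hTw := hT.map_of_orthogonal w fun i hi hiN => by
      simpa [derivFrame, Nat.sub_add_cancel hi] using hw ⟨i - 1, by omega⟩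
    change ρ ^ N • T.symm w = w
    rw [← map_smul, ← hTw, T.symm_apply_apply]

lemma contDiff_rescaledCurve {n : ℕ∞} (hγ : ContDiff ℝ n γ) (s₀ ρ : ℝ) (T : E d ≃ₗ[ℝ] E d) :
    ContDiff ℝ n (rescaledCurve γ s₀ ρ T) :=
  T.symm.toContinuousLinearEquiv.contDiff.comp
    ((hγ.comp (contDiff_const.add (contDiff_const.mul contDiff_id))).sub contDiff_const)

lemma iteratedDeriv_rescaledCurve {n : ℕ} (hγ : ContDiff ℝ n γ) (s₀ ρ : ℝ) (T : E d ≃ₗ[ℝ] E d)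
    (hn : 0 < n) (s : ℝ) : iteratedDeriv n (rescaledCurve γ s₀ ρ T) s =
      ρ ^ n • T.symm (iteratedDeriv n γ (s₀ + ρ * s)) :=
  iteratedDeriv_clm_comp_rescale hγ T.symm.toContinuousLinearEquiv.toContinuousLinearMap s₀ ρ hn s

lemma iteratedDeriv_rescaledCurve_eq_smul {n : ℕ} (hγ : ContDiff ℝ n γ) (hn : 0 < n) (hNn : N ≤ n)
    (s : ℝ) : iteratedDeriv n (rescaledCurve γ s₀ ρ T) s =
      ρ ^ (n - N) • (ρ ^ N • T.symm.toLinearMap) (iteratedDeriv n γ (s₀ + ρ * s)) := by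
  rw [iteratedDeriv_rescaledCurve hγ s₀ ρ T hn, ← pow_sub_mul_pow ρ hNn, mul_smul]
  rfl

lemma smul_symm_derivFrame (hγ : ContDiff ℝ N γ) (s : ℝ) (i : Fin N) :
    (ρ ^ N • T.symm.toLinearMap) (derivFrame N γ (s₀ + ρ * s) i) =
      ρ ^ (N - (i + 1)) • derivFrame N (rescaledCurve γ s₀ ρ T) s i := by
  have hi : (i : ℕ) + 1 ≤ N := i.isLt
  have hγi : ContDiff ℝ (i + 1 : ℕ) γ := hγ.of_le (mod_cast hi)
  rw [derivFrame, derivFrame, iteratedDeriv_rescaledCurve hγi s₀ ρ T i.val.succ_pos, smul_smul,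
    pow_sub_mul_pow ρ hi]
  rfl

lemma IsAnisotropicScaling.norm_iteratedDeriv_rescaledCurve_zero_le
    (hT : IsAnisotropicScaling N γ s₀ ρ T) {n : ℕ} (hγ : ContDiff ℝ n γ) (hnN : n ≤ N)
    (hbound : ‖iteratedDeriv n γ s₀‖ ≤ B) : ‖iteratedDeriv n (rescaledCurve γ s₀ ρ T) 0‖ ≤ B := by
  rcases n.eq_zero_or_pos with rfl | hn
  · simpa [rescaledCurve] using (norm_nonneg _).trans hbound
  · rwa [iteratedDeriv_rescaledCurve hγ s₀ ρ T hn, mul_zero, add_zero,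
      hT.pow_smul_symm_iteratedDeriv hn hnN]

/-- The constant bounding the norm of `ρ ^ N • T⁻¹` for `γ ∈ 𝔊(B, N)`, uniformly in `ρ ≤ 1`. -/
def scalingBound (N : ℕ) (B : ℝ) : ℝ := N * B ^ (N + 1) + 1

lemma one_le_scalingBound (N : ℕ) (hB : 0 ≤ B) : 1 ≤ scalingBound N B :=
  le_add_of_nonneg_left (by positivity)

lemma add_mul_mem_Icc_of_mem_segI {s : ℝ} (hρ : 0 ≤ ρ) (hs : s ∈ segI) :
    s₀ + ρ * s ∈ Set.Icc (s₀ - ρ) (s₀ + ρ) := by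
  constructor <;> nlinarith [hs.1, hs.2]

lemma le_one_of_Icc_subset_segI (hρ : 0 ≤ ρ) (hI : Set.Icc (s₀ - ρ) (s₀ + ρ) ⊆ segI) : ρ ≤ 1 := by
  linarith [(hI (Set.left_mem_Icc.2 (by linarith))).1, (hI (Set.right_mem_Icc.2 (by linarith))).2]

lemma IsAnisotropicScaling.norm_smul_symm_le (hT : IsAnisotropicScaling N γ s₀ ρ T)
    (hγ : CurveClass B N γ) (hB : 0 < B) (hNd : N ≤ d) (hs₀ : s₀ ∈ segI) (hρ : 0 ≤ ρ)
    (hρ_le_one : ρ ≤ 1) (w : E d) :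
    ‖(ρ ^ N • T.symm.toLinearMap) w‖ ≤ scalingBound N B * ‖w‖ := by
  obtain ⟨-, hbound, hdet⟩ := curveClass_iff.1 hγ
  have hfactor (i : Fin N) : |ρ ^ (N - (i + 1 : ℕ))| ≤ 1 := by
    rw [abs_of_nonneg (pow_nonneg hρ _)]
    exact pow_le_one₀ hρ hρ_le_one
  simpa [scalingBound] using hT.scalesFrame.norm_apply_le hfactor hB
    (fun i => hbound (i + 1) (by omega) s₀ hs₀) (hdet s₀ hs₀) w

lemma IsAnisotropicScaling.norm_iteratedDeriv_rescaledCurve_le_of_le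
    (hT : IsAnisotropicScaling N γ s₀ ρ T) (hγ : CurveClass B N γ) (hB : 0 < B) (hNd : N ≤ d)
    (hρ : 0 ≤ ρ) (hI : Set.Icc (s₀ - ρ) (s₀ + ρ) ⊆ segI) {n : ℕ} (hn : 0 < n) (hNn : N ≤ n)
    (hnd : n ≤ 2 * d) {s : ℝ} (hs : s ∈ segI) :
    ‖iteratedDeriv n (rescaledCurve γ s₀ ρ T) s‖ ≤ scalingBound N B * B := by
  have hs₀ : s₀ ∈ segI := hI ⟨by linarith, by linarith⟩
  have hρ_le_one := le_one_of_Icc_subset_segI hρ hI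
  have hγn : ContDiff ℝ n γ := hγ.1.of_le (mod_cast hnd)
  have hK : 0 ≤ scalingBound N B := zero_le_one.trans (one_le_scalingBound N hB.le)
  rw [iteratedDeriv_rescaledCurve_eq_smul hγn hn hNn, norm_smul, norm_pow, Real.norm_of_nonneg hρ]
  calc ρ ^ (n - N) * ‖(ρ ^ N • T.symm.toLinearMap) (iteratedDeriv n γ (s₀ + ρ * s))‖
      ≤ 1 * ‖(ρ ^ N • T.symm.toLinearMap) (iteratedDeriv n γ (s₀ + ρ * s))‖ := by
        gcongr
        exact pow_le_one₀ hρ hρ_le_one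
    _ ≤ scalingBound N B * ‖iteratedDeriv n γ (s₀ + ρ * s)‖ := by
        rw [one_mul]
        exact hT.norm_smul_symm_le hγ hB hNd hs₀ hρ hρ_le_one _
    _ ≤ scalingBound N B * B := by
        gcongr
        exact hγ.2.1 n hnd _ (hI (add_mul_mem_Icc_of_mem_segI hρ hs))

lemma IsAnisotropicScaling.norm_iteratedDeriv_rescaledCurve_le
    (hT : IsAnisotropicScaling N γ s₀ ρ T) (hγ : CurveClass B N γ) (hB : 0 < B) (hN : 0 < N)
    (hNd : N ≤ d) (hρ : 0 ≤ ρ) (hI : Set.Icc (s₀ - ρ) (s₀ + ρ) ⊆ segI) {n : ℕ}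
    (hnd : n ≤ 2 * d) {s : ℝ} (hs : s ∈ segI) :
    ‖iteratedDeriv n (rescaledCurve γ s₀ ρ T) s‖ ≤ scalingBound N B * B + N * B := by
  rcases le_total N n with hNn | hnN
  · exact (hT.norm_iteratedDeriv_rescaledCurve_le_of_le hγ hB hNd hρ hI (hN.trans_le hNn) hNn hnd
      hs).trans (le_add_of_nonneg_right (by positivity))
  · have hs₀ : s₀ ∈ segI := hI ⟨by linarith, by linarith⟩
    have hsmooth (j : ℕ) (hj : j ≤ 2 * d) : ContDiff ℝ j γ := hγ.1.of_le (mod_cast hj)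
    have hzero (j : ℕ) (hj : j < N) : ‖iteratedDeriv j (rescaledCurve γ s₀ ρ T) 0‖ ≤ B :=
      hT.norm_iteratedDeriv_rescaledCurve_zero_le (hsmooth j (by omega)) hj.le
        (hγ.2.1 j (by omega) s₀ hs₀)
    have hN_bound (t : ℝ) (ht : t ∈ segI) :=
      hT.norm_iteratedDeriv_rescaledCurve_le_of_le hγ hB hNd hρ hI hN le_rfl (by omega) ht
    calc ‖iteratedDeriv n (rescaledCurve γ s₀ ρ T) s‖
        ≤ scalingBound N B * B + (N - n : ℕ) * B :=
          norm_iteratedDeriv_le_of_norm_iteratedDeriv_le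
            (contDiff_rescaledCurve (hsmooth N (by omega)) s₀ ρ T) hN_bound hzero
            (Nat.add_sub_of_le hnN) hs
      _ ≤ scalingBound N B * B + N * B := by
          gcongr
          exact Nat.sub_le N n

lemma IsAnisotropicScaling.inv_sq_le_gramDet_rescaledCurve
    (hT : IsAnisotropicScaling N γ s₀ ρ T) (hγ : CurveClass B N γ) (hB : 0 < B) (hNd : N ≤ d)
    (hρ : 0 < ρ) (hI : Set.Icc (s₀ - ρ) (s₀ + ρ) ⊆ segI) {s : ℝ} (hs : s ∈ segI) :
    ((scalingBound N B ^ (d - N) * B) ^ 2)⁻¹ ≤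
      gramDet (derivFrame N (rescaledCurve γ s₀ ρ T) s) := by
  have hs₀ : s₀ ∈ segI := hI ⟨by linarith, by linarith⟩
  have hK : 0 < scalingBound N B := zero_lt_one.trans_le (one_le_scalingBound N hB.le)
  have hle : (B ^ 2)⁻¹ ≤ gramDet (derivFrame N (rescaledCurve γ s₀ ρ T) s) *
      (scalingBound N B ^ (d - N)) ^ 2 :=
    calc (B ^ 2)⁻¹ ≤ gramDet (derivFrame N γ (s₀ + ρ * s)) :=
          (curveClass_iff.1 hγ).2.2 _ (hI (add_mul_mem_Icc_of_mem_segI hρ.le hs))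
      _ ≤ _ := by
          simpa using hT.scalesFrame.gramDet_le (hγ.linearIndependent_derivFrame hB hs₀)
            (fun i => pow_ne_zero _ hρ.ne')
            (hT.norm_smul_symm_le hγ hB hNd hs₀ hρ.le (le_one_of_Icc_subset_segI hρ.le hI))
            (smul_symm_derivFrame (hγ.1.of_le (mod_cast (by omega : N ≤ 2 * d))) s)
  rw [mul_pow, mul_comm, mul_inv]
  exact (mul_inv_le_iff₀ (by positivity)).2 hle

end Rescaling

theorem stmt11_general (d N : ℕ) (hN : 1 ≤ N) (hNd : N ≤ d) (B : ℝ) (hB : 1 < B) :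
    ∃ B₁ > 1, ∀ γ : ℝ → E d, CurveClass B N γ → ∀ s₀ ρ : ℝ, 0 < ρ →
      Set.Icc (s₀ - ρ) (s₀ + ρ) ⊆ segI → ∀ T : E d ≃ₗ[ℝ] E d, IsAnisotropicScaling N γ s₀ ρ T →
        CurveClass B₁ N (rescaledCurve γ s₀ ρ T) := by
  have hB_pos : 0 < B := zero_lt_one.trans hB
  set K := scalingBound N B
  have hK : 1 ≤ K := one_le_scalingBound N hB_pos.le
  have hK_le : K * B ≤ K ^ d * B := by
    gcongr
    exact le_self_pow₀ hK (by omega)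
  have hN_nonneg : 0 ≤ N * B := by positivity
  refine ⟨K ^ d * B + N * B, ?_, fun γ hγ s₀ ρ hρ hI T hT => curveClass_iff.2
    ⟨contDiff_rescaledCurve hγ.1 s₀ ρ T, fun n hn s hs => ?_, fun s hs => ?_⟩⟩
  · nlinarith
  · exact (hT.norm_iteratedDeriv_rescaledCurve_le hγ hB_pos hN hNd hρ.le hI hn hs).trans (by gcongr)
  · refine le_trans ?_ (hT.inv_sq_le_gramDet_rescaledCurve hγ hB_pos hNd hρ hI hs)
    gcongr
    calc K ^ (d - N) * B ≤ K ^ d * B := by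
          gcongr
          exact Nat.sub_le d N
      _ ≤ K ^ d * B + N * B := le_add_of_nonneg_right hN_nonneg

theorem stmt11 (d N : ℕ) (hN : 2 ≤ N) (hNd : N ≤ d) (B : ℝ) (hB : 1 < B) :
    ∃ B₁ > 1, ∀ γ : ℝ → E d, CurveClass B N γ →
      ∀ s₀ ∈ segI, ∀ ρ : ℝ, 0 < ρ → ρ ≤ (B ^ (2 * d))⁻¹ →
        Set.Icc (s₀ - ρ) (s₀ + ρ) ⊆ segI →
        ∀ T : E d ≃ₗ[ℝ] E d,
          (∀ i : ℕ, 1 ≤ i → i ≤ N →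
            T (iteratedDeriv i γ s₀) = ρ ^ i • iteratedDeriv i γ s₀) →
          (∀ v : E d, (∀ i : ℕ, 1 ≤ i → i ≤ N → ⟪iteratedDeriv i γ s₀, v⟫ = 0) →
            T v = ρ ^ N • v) →
          CurveClass B₁ (N - 1) (fun s => T.symm (γ (s₀ + ρ * s) - γ s₀)) := by
  obtain ⟨L, rfl⟩ := Nat.exists_eq_succ_of_ne_zero (by omega : N ≠ 0)
  obtain ⟨B₁, hB₁, hclass⟩ := stmt11_general d (L + 1) (by omega) hNd B hB
  exact ⟨B₁ ^ 2, one_lt_pow₀ hB₁ two_ne_zero, fun γ hγ s₀ _ ρ hρ _ hI T hT hTperp =>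
    (hclass γ hγ s₀ ρ hρ hI T ⟨hT, hTperp⟩).of_succ hB₁.le (by omega)⟩
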